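/- Let O=(0,0), A=(0,1), C=(1,1) in ℝ², X := [O,A] ∪ [O,C], μ := H¹⌊X, and f := χ_{[O,A]}. Then the non-centered maximal function satisfies Mf(O) ≤ 2/(2+√2) < 1, while Mf(x) = 1 for every x ∈ [O,A] with x ≠ O; in particular, Mf : X → ℝ is not continuous at O. -/

import Mathlib

open MeasureTheory Metric Filter Topology
open scoped ENNReal

noncomputable section

/-- The point `O = (0,0)` in the plane. -/
def ptO : EuclideanSpace ℝ (Fin 2) := !₂[0, 0]
/-- The point `A = (0,1)` in the plane. -/
def ptA : EuclideanSpace ℝ (Fin 2) := !₂[0, 1]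
/-- The point `C = (1,1)` in the plane. -/
def ptC : EuclideanSpace ℝ (Fin 2) := !₂[1, 1]

/-- The space `X = [O,A] ∪ [O,C]`, the union of the two closed segments. -/
def Xsp : Set (EuclideanSpace ℝ (Fin 2)) := segment ℝ ptO ptA ∪ segment ℝ ptO ptC

/-- The measure `μ = H¹⌊X`, the `1`-dimensional Hausdorff measure restricted to `X`. -/
def μX : Measure (EuclideanSpace ℝ (Fin 2)) := (μH[1]).restrict Xsp

/-- The function `f = χ_{[O,A]}`. -/
def fX : EuclideanSpace ℝ (Fin 2) → ℝ≥0∞ := (segment ℝ ptO ptA).indicator 1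

/-- The non-centered maximal function of `f` on the metric measure space `(X, d₂, μ)`:
`Mf(x) = sup { (1/μ(B(z,r))) ∫_{B(z,r)} f dμ : z ∈ X, r > 0, x ∈ B(z,r) }`. -/
def Mmax (x : EuclideanSpace ℝ (Fin 2)) : ℝ≥0∞ :=
  ⨆ (z ∈ Xsp) (r : ℝ) (_ : 0 < r) (_ : x ∈ ball z r),
    (∫⁻ y in ball z r, fX y ∂μX) / μX (ball z r)

lemma mem_OA (x : EuclideanSpace ℝ (Fin 2)) :
    x ∈ segment ℝ ptO ptA ↔ x 0 = 0 ∧ 0 ≤ x 1 ∧ x 1 ≤ 1 := by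
  rw [segment_eq_image]
  constructor
  · rintro ⟨t, ⟨h0, h1⟩, rfl⟩
    simp [ptO, ptA, h0, h1]
  · rintro ⟨h, h0, h1⟩
    refine ⟨x 1, ⟨h0, h1⟩, ?_⟩
    ext i
    fin_cases i <;> simp [ptO, ptA, h]

lemma mem_OC (x : EuclideanSpace ℝ (Fin 2)) :
    x ∈ segment ℝ ptO ptC ↔ x 0 = x 1 ∧ 0 ≤ x 1 ∧ x 1 ≤ 1 := by
  rw [segment_eq_image]
  constructor
  · rintro ⟨t, ⟨h0, h1⟩, rfl⟩
    simp [ptO, ptC, h0, h1]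
  · rintro ⟨h, h0, h1⟩
    refine ⟨x 1, ⟨h0, h1⟩, ?_⟩
    ext i
    fin_cases i <;> simp [ptO, ptC, h]

lemma mem_ball_iff2 (x z : EuclideanSpace ℝ (Fin 2)) (r : ℝ) (hr : 0 < r) :
    x ∈ ball z r ↔ (x 0 - z 0) ^ 2 + (x 1 - z 1) ^ 2 < r ^ 2 := by
  rw [mem_ball, EuclideanSpace.dist_eq, Real.sqrt_lt' hr]
  simp [Fin.sum_univ_two, Real.dist_eq, sq_abs]

lemma meas_OA : MeasurableSet (segment ℝ ptO ptA) := by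
  have : IsClosed (segment ℝ ptO ptA) := by
    have : segment ℝ ptO ptA = {x | x 0 = 0} ∩ ({x | 0 ≤ x 1} ∩ {x | x 1 ≤ 1}) := by
      ext x; exact mem_OA x
    rw [this]
    exact (isClosed_eq (by fun_prop) (by fun_prop)).inter
      ((isClosed_le (by fun_prop) (by fun_prop)).inter (isClosed_le (by fun_prop) (by fun_prop)))
  exact this.measurableSet

lemma meas_OC : MeasurableSet (segment ℝ ptO ptC) := by
  have : IsClosed (segment ℝ ptO ptC) := by
    have : segment ℝ ptO ptC = {x | x 0 = x 1} ∩ ({x | 0 ≤ x 1} ∩ {x | x 1 ≤ 1}) := by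
      ext x; exact mem_OC x
    rw [this]
    exact (isClosed_eq (by fun_prop) (by fun_prop)).inter
      ((isClosed_le (by fun_prop) (by fun_prop)).inter (isClosed_le (by fun_prop) (by fun_prop)))
  exact this.measurableSet

lemma lint_eq (z : EuclideanSpace ℝ (Fin 2)) (r : ℝ) :
    ∫⁻ y in ball z r, fX y ∂μX =
      (μH[1] : Measure (EuclideanSpace ℝ (Fin 2))) (ball z r ∩ segment ℝ ptO ptA) := by
  unfold fX μX
  rw [lintegral_indicator_one meas_OA, Measure.restrict_apply meas_OA,
    Measure.restrict_apply (meas_OA.inter measurableSet_ball)]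
  congr 1
  ext x
  simp only [Xsp, Set.mem_inter_iff, Set.mem_union]
  tauto

lemma μX_ball (z : EuclideanSpace ℝ (Fin 2)) (r : ℝ) :
    μX (ball z r) =
      (μH[1] : Measure (EuclideanSpace ℝ (Fin 2))) (ball z r ∩ segment ℝ ptO ptA) +
      (μH[1] : Measure (EuclideanSpace ℝ (Fin 2))) (ball z r ∩ segment ℝ ptO ptC) := by
  unfold μX
  rw [Measure.restrict_apply measurableSet_ball, Xsp, Set.inter_union_distrib_left]
  refine measure_union₀ (measurableSet_ball.inter meas_OC).nullMeasurableSet ?_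
  have : NullSingletonClass (μH[1] : Measure (EuclideanSpace ℝ (Fin 2))) :=
    Measure.nullSingletonClass_hausdorff _ one_pos
  refine measure_mono_null (t := {ptO}) ?_ (measure_singleton _)
  rintro x ⟨⟨-, h1⟩, -, h2⟩
  rw [mem_OA] at h1
  rw [mem_OC] at h2
  have : x 1 = 0 := by rw [← h2.1, h1.1]
  ext i
  fin_cases i <;> simp [ptO, h1.1, this]

/-- The similarity of ratio `1/√2` sending `(0,s)` to `(s/2,s/2)`. -/
def Tmap (x : EuclideanSpace ℝ (Fin 2)) : EuclideanSpace ℝ (Fin 2) :=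
  !₂[(x 1 + x 0) / 2, (x 1 - x 0) / 2]

lemma Tmap_anti : AntilipschitzWith (NNReal.sqrt 2) Tmap := by
  refine AntilipschitzWith.of_le_mul_dist fun x y => ?_
  rw [EuclideanSpace.dist_eq, EuclideanSpace.dist_eq, Real.coe_sqrt, ← Real.sqrt_mul (by positivity)]
  apply Real.sqrt_le_sqrt
  simp only [Fin.sum_univ_two, Real.dist_eq, sq_abs, Tmap]
  simp
  apply le_of_eq
  ring

lemma key (z : EuclideanSpace ℝ (Fin 2)) (hz : z ∈ Xsp) (r : ℝ) (hr : 0 < r)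
    (h : ptO ∈ ball z r) :
    (μH[1] : Measure (EuclideanSpace ℝ (Fin 2))) (ball z r ∩ segment ℝ ptO ptA) ≤
    ENNReal.ofReal (Real.sqrt 2) *
      (μH[1] : Measure (EuclideanSpace ℝ (Fin 2))) (ball z r ∩ segment ℝ ptO ptC) := by
  have h1 := Tmap_anti.le_hausdorffMeasure_image (d := 1) zero_le_one
    (ball z r ∩ segment ℝ ptO ptA)
  refine h1.trans ?_
  have hz0 : 0 ≤ z 0 := by
    rcases hz with hz | hz
    · rw [mem_OA] at hz; linarith
    · rw [mem_OC] at hz; linarith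
  have e : ((NNReal.sqrt 2 : NNReal) : ℝ≥0∞) ^ (1 : ℝ) = ENNReal.ofReal (Real.sqrt 2) := by
    rw [ENNReal.rpow_one, ← ENNReal.ofReal_coe_nnreal, Real.coe_sqrt]; simp
  rw [e]
  gcongr
  rintro _ ⟨x, ⟨hx, hA⟩, rfl⟩
  rw [mem_OA] at hA
  rw [mem_ball_iff2 _ _ _ hr] at hx h
  refine ⟨?_, ?_⟩
  · rw [mem_ball_iff2 _ _ _ hr]
    simp [Tmap, ptO, hA.1] at hx h ⊢
    nlinarith [mul_nonneg hz0 hA.2.1]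
  · rw [mem_OC]
    simp [Tmap, hA.1]
    constructor <;> linarith

lemma cpos : (2 / (2 + Real.sqrt 2) : ℝ) * (1 + (Real.sqrt 2)⁻¹) = 1 := by
  have h : Real.sqrt 2 ^ 2 = 2 := Real.sq_sqrt (by norm_num)
  have h' : 0 < Real.sqrt 2 := by positivity
  field_simp
  nlinarith

lemma part1 : Mmax ptO ≤ ENNReal.ofReal (2 / (2 + Real.sqrt 2)) := by
  unfold Mmax
  refine iSup₂_le fun z hz => iSup_le fun r => iSup₂_le fun hr h => ?_
  rw [lint_eq, μX_ball]
  have hk := key z hz r hr h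
  set a := (μH[1] : Measure (EuclideanSpace ℝ (Fin 2))) (ball z r ∩ segment ℝ ptO ptA)
  set b := (μH[1] : Measure (EuclideanSpace ℝ (Fin 2))) (ball z r ∩ segment ℝ ptO ptC)
  have h' : 0 < Real.sqrt 2 := by positivity
  have hb : ENNReal.ofReal (Real.sqrt 2)⁻¹ * a ≤ b := by
    calc _ ≤ ENNReal.ofReal (Real.sqrt 2)⁻¹ * (ENNReal.ofReal (Real.sqrt 2) * b) := by gcongr
      _ = b := by
        rw [← mul_assoc, ← ENNReal.ofReal_mul (by positivity), inv_mul_cancel₀ h'.ne']; simp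
  apply ENNReal.div_le_of_le_mul
  calc a = ENNReal.ofReal (2 / (2 + Real.sqrt 2) * (1 + (Real.sqrt 2)⁻¹)) * a := by
        rw [cpos]; simp
    _ = ENNReal.ofReal (2 / (2 + Real.sqrt 2)) * (a + ENNReal.ofReal (Real.sqrt 2)⁻¹ * a) := by
        rw [ENNReal.ofReal_mul (by positivity), ENNReal.ofReal_add (by positivity) (by positivity),
          mul_assoc, add_mul]; simp
    _ ≤ _ := by gcongr

lemma part2 : ENNReal.ofReal (2 / (2 + Real.sqrt 2)) < 1 := by
  rw [ENNReal.ofReal_lt_one, div_lt_one (by positivity)]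
  have h' : 0 < Real.sqrt 2 := by positivity
  linarith

lemma part3 (x : EuclideanSpace ℝ (Fin 2)) (hx : x ∈ segment ℝ ptO ptA) (hne : x ≠ ptO) :
    Mmax x = 1 := by
  apply le_antisymm
  · unfold Mmax
    refine iSup₂_le fun z hz => iSup_le fun r => iSup₂_le fun hr h => ?_
    rw [lint_eq, μX_ball]
    apply ENNReal.div_le_of_le_mul
    rw [one_mul]
    exact le_self_add
  · have hx' := (mem_OA x).1 hx
    have hpos : 0 < x 1 := by
      refine lt_of_le_of_ne hx'.2.1 fun h => hne ?_
      ext i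
      fin_cases i <;> simp [ptO, hx'.1, ← h]
    have hr : 0 < x 1 / 2 := by linarith
    have hC : ball x (x 1 / 2) ∩ segment ℝ ptO ptC = ∅ := by
      ext y
      simp only [Set.mem_inter_iff, Set.mem_empty_iff_false, iff_false, not_and]
      intro h1 h2
      rw [mem_ball_iff2 _ _ _ hr] at h1
      rw [mem_OC] at h2
      rw [h2.1, hx'.1] at h1
      nlinarith [sq_nonneg (2 * y 1 - x 1)]
    have hle : (1 : ℝ≥0∞) ≤ (∫⁻ y in ball x (x 1 / 2), fX y ∂μX) / μX (ball x (x 1 / 2)) := by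
      rw [lint_eq, μX_ball, hC, measure_empty, add_zero, ENNReal.div_self]
      · intro h0
        have hsub : segment ℝ ((3 / 4 : ℝ) • x) x ⊆ ball x (x 1 / 2) ∩ segment ℝ ptO ptA := by
          refine Set.subset_inter ((convex_ball _ _).segment_subset ?_ (mem_ball_self hr))
            ((convex_segment _ _).segment_subset ?_ hx)
          · rw [mem_ball_iff2 _ _ _ hr]
            simp [hx'.1]
            nlinarith
          · rw [mem_OA]
            simp [hx'.1]
            constructor <;> linarith
        have := measure_mono_null hsub h0
        rw [hausdorffMeasure_segment, edist_eq_zero] at this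
        have := congrArg (fun v : EuclideanSpace ℝ (Fin 2) => v 1) this
        simp at this
        linarith
      · refine ((measure_mono Set.inter_subset_right).trans_lt ?_).ne
        rw [hausdorffMeasure_segment]
        exact edist_lt_top _ _
    refine hle.trans ?_
    unfold Mmax
    exact le_iSup₂_of_le x (Or.inl hx) (le_iSup_of_le (x 1 / 2)
      (le_iSup₂_of_le hr (mem_ball_self hr) le_rfl))

lemma part4 : ¬ ContinuousWithinAt Mmax Xsp ptO := by
  intro hc
  have ht : Tendsto (fun t : ℝ => t • ptA) (𝓝[>] 0) (𝓝[Xsp] ptO) := by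
    apply tendsto_nhdsWithin_of_tendsto_nhds_of_eventually_within
    · have : Tendsto (fun t : ℝ => t • ptA) (𝓝 0) (𝓝 ((0 : ℝ) • ptA)) :=
        (continuous_id.smul continuous_const).tendsto 0
      have e : (0 : ℝ) • ptA = ptO := by
        ext i
        fin_cases i <;> simp [ptO]
      rw [e] at this
      exact this.mono_left nhdsWithin_le_nhds
    · filter_upwards [Ioo_mem_nhdsGT (zero_lt_one' ℝ)] with t ht
      left
      rw [mem_OA]
      simp [ptA, ht.1.le, ht.2.le]
  have h1 := hc.tendsto.comp ht
  have h2 : Tendsto (Mmax ∘ fun t : ℝ => t • ptA) (𝓝[>] 0) (𝓝 1) := by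
    refine tendsto_const_nhds.congr' ?_
    filter_upwards [Ioo_mem_nhdsGT (zero_lt_one' ℝ)] with t ht
    symm
    apply part3
    · rw [mem_OA]
      simp [ptA, ht.1.le, ht.2.le]
    · intro h
      have := congrArg (fun v : EuclideanSpace ℝ (Fin 2) => v 1) h
      simp [ptA, ptO] at this
      exact ht.1.ne' this
  have := tendsto_nhds_unique h1 h2
  exact absurd (part1.trans_lt part2) (by rw [this]; exact lt_irrefl _)

/-- The non-centered maximal function of `f = χ_{[O,A]}` on
`(X, d₂, H¹⌊X)` satisfies `Mf(O) ≤ 2/(2+√2) < 1`, while `Mf(x) = 1` for every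
`x ∈ [O,A]` with `x ≠ O`; in particular, `Mf` is not continuous at `O` (as a function
on the metric space `X`). -/
theorem Mmax_not_continuousAt :
    Mmax ptO ≤ ENNReal.ofReal (2 / (2 + Real.sqrt 2)) ∧
    ENNReal.ofReal (2 / (2 + Real.sqrt 2)) < 1 ∧
    (∀ x ∈ segment ℝ ptO ptA, x ≠ ptO → Mmax x = 1) ∧
    ¬ ContinuousWithinAt Mmax Xsp ptO := by
  exact ⟨part1, part2, part3, part4⟩

end
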